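/- arXiv:1501.03682 — 4 statements merged into one kernel-verified Lean document; each statement's English description precedes it below -/
import Mathlib

section
/- (Approximation order, Corollary 4.4.) Let n ≥ 2 be an integer and μ > 1 real. For each integer m ≥ 1 let φ_m : ℝ → ℝ be continuous, compactly supported, with Fourier transform equal to Φ^{(n,m)}, and let V^{(n,m)} be the closure in L²(ℝ) of the linear span of { φ_m(· − 2^{-m} α) : α ∈ ℤ }. Then for every f in the Sobolev space H^{n-1}(ℝ) there exists a constant C_f, independent of m, such that for every m ≥ 1, inf_{g ∈ V^{(n,m)}} ‖f − g‖_{L²(ℝ)} ≤ C_f · 2^{-m(n-1)}. -/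
open MeasureTheory Filter Complex

/-- Binomial coefficient `binom p q` extended to integer `q`, zero outside `0 ≤ q ≤ p`. -/
noncomputable def binomZ (p : ℕ) (q : ℤ) : ℝ :=
  if 0 ≤ q then (p.choose q.toNat : ℝ) else 0

/-- The nonstationary mask `a^{(n,m)}_α` with tension parameter `μ`. -/
noncomputable def maskNS (n m : ℕ) (μ : ℝ) (α : ℤ) : ℝ :=
  if m = 0 then (if α = 0 ∨ α = 1 then 1/2 else 0)
  else if 0 ≤ α ∧ α ≤ (n : ℤ) + 1 then
    (2 : ℝ) ^ (-((n : ℝ) + 1 + (m : ℝ) ^ (-μ))) *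
      (binomZ (n+1) α + 4 * ((2 : ℝ) ^ ((m : ℝ) ^ (-μ)) - 1) * binomZ (n-1) (α-1))
  else 0

/-- The symbol `A^{(n,m)}(z) = Σ_{α=0}^{n+1} a^{(n,m)}_α z^α`. -/
noncomputable def symbolNS (n m : ℕ) (μ : ℝ) (z : ℂ) : ℂ :=
  ∑ α ∈ Finset.range (n+2), (maskNS n m μ (α : ℤ) : ℂ) * z ^ α

/-- Partial product `∏_{k=m}^{N-1} A^{(n,k)}(e^{-iω/2^{k+1}})` of the infinite product
defining the Fourier transform `Φ^{(n,m)}` of the refinable ripplet `φ^{(n,m)}`. -/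
noncomputable def partialProdNS (n m : ℕ) (μ : ℝ) (ω : ℝ) (N : ℕ) : ℂ :=
  ∏ k ∈ Finset.Ico m N, symbolNS n k μ (Complex.exp (-(Complex.I * ω) / 2 ^ (k + 1)))

lemma aux_symbol_eq (p k : ℕ) (hk : 1 ≤ k) (μ : ℝ) (z : ℂ) :
    symbolNS (p + 1) k μ z =
      (((2 : ℝ) ^ (-(((p + 1 : ℕ) : ℝ) + 1 + (k : ℝ) ^ (-μ))) : ℝ) : ℂ) *
        ((1 + z) ^ (p + 2) +
          4 * (((2 : ℝ) ^ ((k : ℝ) ^ (-μ)) - 1 : ℝ) : ℂ) * (z * (1 + z) ^ p)) := by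
  unfold symbolNS
  have hk0 : k ≠ 0 := by omega
  set a : ℝ := (2 : ℝ) ^ (-(((p + 1 : ℕ) : ℝ) + 1 + (k : ℝ) ^ (-μ))) with ha
  set b : ℝ := (2 : ℝ) ^ ((k : ℝ) ^ (-μ)) - 1 with hb
  have h1 : (1 + z) ^ (p + 2) =
      ∑ α ∈ Finset.range (p + 1 + 2), ((p + 2).choose α : ℂ) * z ^ α := by
    rw [add_comm, add_pow]
    refine Finset.sum_congr rfl fun i _ => ?_
    simp [mul_comm]
  have h2 : z * (1 + z) ^ p =
      ∑ α ∈ Finset.range (p + 1 + 2), ((binomZ p ((α : ℤ) - 1) : ℝ) : ℂ) * z ^ α := by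
    rw [Finset.sum_range_succ', Finset.sum_range_succ]
    have h3 : ((binomZ p (((p + 1 + 1 - 1 + 1 : ℕ) : ℤ) - 1) : ℝ) : ℂ) = 0 := by
      simp [binomZ]
    have h4 : ((binomZ p (((0 : ℕ) : ℤ) - 1) : ℝ) : ℂ) = 0 := by
      simp [binomZ]
    rw [h4]
    have h5 : ((binomZ p (((p + 1 + 1 : ℕ) : ℤ) - 1) : ℝ) : ℂ) = 0 := by
      have : (((p + 1 + 1 : ℕ) : ℤ) - 1) = ((p + 1 : ℕ) : ℤ) := by push_cast; ring
      rw [this]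
      unfold binomZ
      rw [if_pos (by positivity), Int.toNat_natCast]
      simp
    rw [h5, zero_mul, zero_mul, add_zero, add_zero, add_comm 1 z, add_pow, Finset.mul_sum]
    refine Finset.sum_congr rfl fun i _ => ?_
    have : (((i + 1 : ℕ) : ℤ) - 1) = (i : ℤ) := by push_cast; ring
    rw [this]
    unfold binomZ
    rw [if_pos (by positivity), Int.toNat_natCast]
    simp only [one_pow, mul_one]
    push_cast
    ring
  rw [h1, h2, Finset.mul_sum, ← Finset.sum_add_distrib, Finset.mul_sum]
  refine Finset.sum_congr rfl fun i hi => ?_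
  have hi' : i < p + 1 + 2 := Finset.mem_range.mp hi
  have : maskNS (p + 1) k μ (i : ℤ) =
      a * (((p + 2).choose i : ℝ) + 4 * b * binomZ p ((i : ℤ) - 1)) := by
    unfold maskNS
    rw [if_neg hk0, if_pos ⟨by positivity, by push_cast; omega⟩]
    have : binomZ (p + 1 + 1) (i : ℤ) = ((p + 2).choose i : ℝ) := by
      unfold binomZ
      rw [if_pos (by positivity), Int.toNat_natCast]
    rw [this]
    rfl
  rw [this]
  push_cast
  ring

/-- The real quadratic factor. -/
noncomputable def auxQ (k : ℕ) (μ θ : ℝ) : ℝ :=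
  1 - (2 : ℝ) ^ (-((k : ℝ) ^ (-μ))) * Real.sin θ ^ 2

lemma aux_symbol_norm (p k : ℕ) (hk : 1 ≤ k) (μ ω : ℝ) :
    ‖symbolNS (p + 1) k μ (Complex.exp (-(Complex.I * ω) / 2 ^ (k + 1)))‖ =
      |Real.cos (ω / 2 ^ (k + 2))| ^ p * |auxQ k μ (ω / 2 ^ (k + 2))| := by
  set θ : ℝ := ω / 2 ^ (k + 2) with hθ
  set w : ℂ := Complex.exp (((-θ : ℝ) : ℂ) * Complex.I) with hw
  have hz : Complex.exp (-(Complex.I * ω) / 2 ^ (k + 1)) = w ^ 2 := by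
    rw [hw, ← Complex.exp_nat_mul]
    congr 1
    rw [hθ]; push_cast; field_simp; ring
  have hwn : ‖w‖ = 1 := Complex.norm_exp_ofReal_mul_I _
  have h1 : 1 + w ^ 2 = w * (2 * (Real.cos θ : ℂ)) := by
    have e1 : (2 : ℂ) * (Real.cos θ : ℂ) = Complex.exp ((θ : ℂ) * Complex.I) + w := by
      rw [Complex.ofReal_cos, Complex.two_cos, hw]; push_cast; ring_nf
    have e2 : w * Complex.exp ((θ : ℂ) * Complex.I) = 1 := by
      rw [hw, ← Complex.exp_add]; push_cast; simp
    rw [e1, mul_add, e2]; ring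
  rw [hz, aux_symbol_eq p k hk]
  set e : ℝ := (k : ℝ) ^ (-μ) with he
  have h2 : (2 : ℝ) ^ (-(((p + 1 : ℕ) : ℝ) + 1 + e)) = (2 : ℝ) ^ (-e) * ((2 : ℝ) ^ (p + 2))⁻¹ := by
    rw [← Real.rpow_natCast, ← Real.rpow_neg (by norm_num), ← Real.rpow_add (by norm_num)]
    congr 1; push_cast; ring
  have h3 : (2 : ℝ) ^ (-e) * (2 : ℝ) ^ e = 1 := by
    rw [← Real.rpow_add (by norm_num)]; simp
  have h4 : (((2 : ℝ) ^ (-(((p + 1 : ℕ) : ℝ) + 1 + e)) : ℝ) : ℂ) *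
        ((1 + w ^ 2) ^ (p + 2) +
          4 * (((2 : ℝ) ^ e - 1 : ℝ) : ℂ) * (w ^ 2 * (1 + w ^ 2) ^ p)) =
      w ^ (p + 2) * ((Real.cos θ ^ p * auxQ k μ θ : ℝ) : ℂ) := by
    have h5 : Real.cos θ ^ p * auxQ k μ θ = (2 : ℝ) ^ (-e) * ((2 : ℝ) ^ (p + 2))⁻¹ *
        ((2 * Real.cos θ) ^ (p + 2) + 4 * ((2 : ℝ) ^ e - 1) * (2 * Real.cos θ) ^ p) := by
      unfold auxQ
      rw [Real.sin_sq, ← he]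
      have : (2 : ℝ) ^ (-e) * ((2 : ℝ) ^ (p + 2))⁻¹ *
        ((2 * Real.cos θ) ^ (p + 2) + 4 * ((2 : ℝ) ^ e - 1) * (2 * Real.cos θ) ^ p)
        = Real.cos θ ^ p * ((2 : ℝ) ^ (-e) * (Real.cos θ ^ 2 - 1) + (2 : ℝ) ^ (-e) * (2 : ℝ) ^ e) := by
        rw [mul_pow, mul_pow]; field_simp; ring
      rw [this, h3]; ring
    rw [h5, h1, h2]
    push_cast
    ring
  rw [h4, norm_mul, norm_pow, hwn, one_pow, one_mul, Complex.norm_real, Real.norm_eq_abs, abs_mul,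
    abs_pow]

lemma auxQ_le_one (k : ℕ) (μ θ : ℝ) : auxQ k μ θ ≤ 1 := by
  unfold auxQ
  have : (0 : ℝ) ≤ (2 : ℝ) ^ (-((k : ℝ) ^ (-μ))) * Real.sin θ ^ 2 := by positivity
  linarith

lemma auxQ_ge (k : ℕ) (μ θ : ℝ) : Real.cos θ ^ 2 ≤ auxQ k μ θ := by
  unfold auxQ
  have h : (2 : ℝ) ^ (-((k : ℝ) ^ (-μ))) ≤ 1 :=
    Real.rpow_le_one_of_one_le_of_nonpos (by norm_num) (by
      have : (0 : ℝ) ≤ (k : ℝ) ^ (-μ) := by positivity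
      linarith)
  have h2 := mul_le_mul_of_nonneg_right h (sq_nonneg (Real.sin θ))
  nlinarith [Real.sin_sq_add_cos_sq θ]

lemma aux_prod_cos (x : ℝ) (M : ℕ) :
    |Real.sin x| = 2 ^ M * |Real.sin (x / 2 ^ M)| *
      ∏ j ∈ Finset.range M, |Real.cos (x / 2 ^ (j + 1))| := by
  induction M with
  | zero => simp
  | succ M ih =>
    rw [ih, Finset.prod_range_succ]
    have : Real.sin (x / 2 ^ M) = 2 * Real.sin (x / 2 ^ (M + 1)) * Real.cos (x / 2 ^ (M + 1)) := by
      rw [← Real.sin_two_mul]; congr 1; field_simp; ring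
    rw [this, abs_mul, abs_mul, abs_two]
    ring

lemma aux_pp_norm (p m : ℕ) (hm : 1 ≤ m) (μ ω : ℝ) (M : ℕ) :
    ‖partialProdNS (p + 1) m μ ω (m + M)‖ =
      (∏ j ∈ Finset.range M, |Real.cos (ω / 2 ^ (m + 1) / 2 ^ (j + 1))|) ^ p *
      ∏ j ∈ Finset.range M, |auxQ (m + j) μ (ω / 2 ^ (m + 1) / 2 ^ (j + 1))| := by
  unfold partialProdNS
  rw [norm_prod, Finset.prod_Ico_eq_prod_range, ← Finset.prod_pow, ← Finset.prod_mul_distrib]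
  simp only [Nat.add_sub_cancel_left]
  refine Finset.prod_congr rfl fun j _ => ?_
  rw [aux_symbol_norm p (m + j) (by omega)]
  have : ω / 2 ^ (m + j + 2) = ω / 2 ^ (m + 1) / 2 ^ (j + 1) := by
    rw [div_div]; congr 1; ring
  rw [this]

lemma aux_Q_prod_le (m M : ℕ) (μ x : ℝ) :
    ∏ j ∈ Finset.range M, |auxQ (m + j) μ (x / 2 ^ (j + 1))| ≤ 1 := by
  refine Finset.prod_le_one (fun _ _ => abs_nonneg _) fun j _ => ?_
  rw [abs_of_nonneg (le_trans (sq_nonneg _) (auxQ_ge _ _ _))]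
  exact auxQ_le_one _ _ _

lemma aux_cos_prod_le (M : ℕ) (x : ℝ) :
    ∏ j ∈ Finset.range M, |Real.cos (x / 2 ^ (j + 1))| ≤ 1 :=
  Finset.prod_le_one (fun _ _ => abs_nonneg _) fun _ _ => Real.abs_cos_le_one _

lemma aux_pp_le_one (p m : ℕ) (hm : 1 ≤ m) (μ ω : ℝ) (M : ℕ) :
    ‖partialProdNS (p + 1) m μ ω (m + M)‖ ≤ 1 := by
  rw [aux_pp_norm p m hm]
  exact mul_le_one₀ (pow_le_one₀ (Finset.prod_nonneg fun _ _ => abs_nonneg _) (aux_cos_prod_le _ _))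
    (Finset.prod_nonneg fun _ _ => abs_nonneg _) (aux_Q_prod_le _ _ _ _)

lemma aux_pp_upper (p m : ℕ) (hm : 1 ≤ m) (μ ω : ℝ) (M : ℕ) :
    (2 ^ M * |Real.sin (ω / 2 ^ (m + 1) / 2 ^ M)|) ^ p *
      ‖partialProdNS (p + 1) m μ ω (m + M)‖ ≤ |Real.sin (ω / 2 ^ (m + 1))| ^ p := by
  rw [aux_pp_norm p m hm, aux_prod_cos (ω / 2 ^ (m + 1)) M,
    mul_pow _ (∏ j ∈ Finset.range M, |Real.cos (ω / 2 ^ (m + 1) / 2 ^ (j + 1))|), ← mul_assoc]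
  exact mul_le_of_le_one_right (by positivity) (aux_Q_prod_le _ _ _ _)

lemma aux_pp_lower (p m : ℕ) (hm : 1 ≤ m) (μ ω : ℝ) (M : ℕ)
    (hx : |ω / 2 ^ (m + 1)| ≤ Real.pi / 2) :
    (2 / Real.pi) ^ (p + 2) ≤ ‖partialProdNS (p + 1) m μ ω (m + M)‖ := by
  set x := ω / 2 ^ (m + 1) with hxd
  have hc : 2 / Real.pi ≤ ∏ j ∈ Finset.range M, |Real.cos (x / 2 ^ (j + 1))| := by
    by_cases h0 : x = 0
    · simp only [h0, zero_div, Real.cos_zero, abs_one, Finset.prod_const_one]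
      rw [div_le_one Real.pi_pos]; exact Real.two_le_pi
    have hxp : 0 < |x| := abs_pos.mpr h0
    have h1 : 2 / Real.pi * |x| ≤ |Real.sin x| := by
      have := Real.mul_le_sin (abs_nonneg x) hx
      rcases abs_cases x with ⟨h, _⟩ | ⟨h, _⟩
      · rw [h] at this ⊢; exact this.trans (le_abs_self _)
      · rw [h] at this ⊢; rw [Real.sin_neg] at this; exact this.trans (neg_le_abs _)
    have h2 : 2 ^ M * |Real.sin (x / 2 ^ M)| ≤ |x| := by
      have : |Real.sin (x / 2 ^ M)| ≤ |x / 2 ^ M| := Real.abs_sin_le_abs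
      rw [abs_div, abs_of_pos (by positivity : (0 : ℝ) < 2 ^ M), le_div_iff₀ (by positivity)] at this
      linarith
    rw [aux_prod_cos x M] at h1
    have h3 : 2 / Real.pi * |x| ≤ |x| * ∏ j ∈ Finset.range M, |Real.cos (x / 2 ^ (j + 1))| :=
      h1.trans (mul_le_mul_of_nonneg_right h2 (Finset.prod_nonneg fun _ _ => abs_nonneg _))
    rw [mul_comm] at h3
    exact le_of_mul_le_mul_left h3 hxp
  have hq : (∏ j ∈ Finset.range M, |Real.cos (x / 2 ^ (j + 1))|) ^ 2 ≤
      ∏ j ∈ Finset.range M, |auxQ (m + j) μ (x / 2 ^ (j + 1))| := by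
    rw [← Finset.prod_pow]
    refine Finset.prod_le_prod (fun _ _ => by positivity) fun j _ => ?_
    rw [sq_abs]
    exact (auxQ_ge _ _ _).trans (le_abs_self _)
  rw [aux_pp_norm p m hm, ← hxd, pow_add]
  have hpi : 0 ≤ 2 / Real.pi := by positivity
  exact mul_le_mul (pow_le_pow_left₀ hpi hc _)
    ((pow_le_pow_left₀ hpi hc _).trans hq) (by positivity) (by positivity)

section PhiBounds
variable {p m : ℕ} {μ ω : ℝ} {L : ℂ}

lemma aux_tendsto_shift
    (h : Tendsto (fun N => partialProdNS (p + 1) m μ ω N) atTop (nhds L)) :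
    Tendsto (fun M => ‖partialProdNS (p + 1) m μ ω (m + M)‖) atTop (nhds ‖L‖) := by
  have := ((tendsto_add_atTop_iff_nat m).mpr h).norm
  simpa only [add_comm] using this

lemma aux_Phi_le_one (hm : 1 ≤ m)
    (h : Tendsto (fun N => partialProdNS (p + 1) m μ ω N) atTop (nhds L)) : ‖L‖ ≤ 1 :=
  le_of_tendsto' (aux_tendsto_shift h) fun M => aux_pp_le_one p m hm μ ω M

lemma aux_Phi_lower (hm : 1 ≤ m) (hx : |ω / 2 ^ (m + 1)| ≤ Real.pi / 2)
    (h : Tendsto (fun N => partialProdNS (p + 1) m μ ω N) atTop (nhds L)) :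
    (2 / Real.pi) ^ (p + 2) ≤ ‖L‖ :=
  ge_of_tendsto' (aux_tendsto_shift h) fun M => aux_pp_lower p m hm μ ω M hx

lemma aux_tendsto_sin (x : ℝ) :
    Tendsto (fun M : ℕ => 2 ^ M * |Real.sin (x / 2 ^ M)|) atTop (nhds |x|) := by
  have h0 : Tendsto (fun M : ℕ => x / 2 ^ M) atTop (nhds 0) := by
    have := (tendsto_pow_atTop_nhds_zero_of_lt_one (r := (1 / 2 : ℝ)) (by norm_num)
      (by norm_num)).const_mul x
    simpa [div_eq_mul_inv] using this
  have h1 := (Real.continuous_sinc.tendsto 0).comp h0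
  have h2 := (h1.const_mul x).abs
  rw [Real.sinc_zero, mul_one] at h2
  refine h2.congr fun M => ?_
  by_cases hx : x = 0
  · simp [hx]
  simp only [Function.comp]
  rw [Real.sinc_of_ne_zero (by positivity), ← abs_of_pos (by positivity : (0 : ℝ) < 2 ^ M),
    ← abs_mul, abs_of_pos (by positivity : (0 : ℝ) < 2 ^ M)]
  congr 1
  field_simp

lemma aux_Phi_upper (hm : 1 ≤ m)
    (h : Tendsto (fun N => partialProdNS (p + 1) m μ ω N) atTop (nhds L)) :
    |ω / 2 ^ (m + 1)| ^ p * ‖L‖ ≤ |Real.sin (ω / 2 ^ (m + 1))| ^ p :=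
  le_of_tendsto' (((aux_tendsto_sin _).pow p).mul (aux_tendsto_shift h))
    fun M => aux_pp_upper p m hm μ ω M

end PhiBounds

lemma aux_pp_continuous (n m : ℕ) (μ : ℝ) (N : ℕ) :
    Continuous fun ω : ℝ => partialProdNS n m μ ω N := by
  unfold partialProdNS symbolNS
  fun_prop

lemma aux_Phi_measurable {n m : ℕ} {μ : ℝ} {Φ : ℝ → ℂ}
    (h : ∀ ω : ℝ, Tendsto (fun N => partialProdNS n m μ ω N) atTop (nhds (Φ ω))) :
    Measurable Φ :=
  measurable_of_tendsto_metrizable (fun N => (aux_pp_continuous n m μ N).measurable)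
    (tendsto_pi_nhds.mpr h)

section Plancherel
open FourierTransform SchwartzMap

lemma aux_fourier_ae_eq (u : ℝ → ℂ) (h1 : Integrable u) (h2 : MemLp u 2 volume) :
    ((𝓕 (h2.toLp u) : Lp ℂ 2 (volume : Measure ℝ)) : ℝ → ℂ) =ᵐ[volume] 𝓕 u := by
  set U : Lp ℂ 2 (volume : Measure ℝ) := 𝓕 (h2.toLp u) with hU
  have hcont : Continuous (𝓕 u) :=
    VectorFourier.fourierIntegral_continuous Real.continuous_fourierChar
      (by exact continuous_inner) h1
  refine ae_eq_of_integral_contDiff_smul_eq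
    ((Lp.memLp U).locallyIntegrable (by norm_num)) hcont.locallyIntegrable ?_
  intro g hg hgs
  have hgs' : HasCompactSupport (fun x => (g x : ℂ)) := hgs.comp_left (g := fun t : ℝ => (t : ℂ)) (by simp)
  have hg' : ContDiff ℝ (⊤ : ℕ∞) (fun x => (g x : ℂ)) := Complex.ofRealCLM.contDiff.comp hg
  set G : 𝓢(ℝ, ℂ) := hgs'.toSchwartzMap hg' with hG
  have hGx : ∀ x, G x = (g x : ℂ) := fun x => rfl
  have e1 := congrArg (fun T => T G) (Lp.fourier_toTemperedDistribution_eq (h2.toLp u))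
  simp only [TemperedDistribution.fourier_apply, Lp.toTemperedDistribution_apply] at e1
  have e2 : ∫ x, (𝓕 G) x • (h2.toLp u) x = ∫ x, 𝓕 (G : ℝ → ℂ) x • u x := by
    refine integral_congr_ae ?_
    filter_upwards [h2.coeFn_toLp] with x hx
    rw [hx, SchwartzMap.fourier_coe]
  have e3 : ∫ x, 𝓕 (G : ℝ → ℂ) x • u x = ∫ x, (G x) • 𝓕 u x := by
    have := VectorFourier.integral_fourierIntegral_smul_eq_flip (e := Real.fourierChar)
      (μ := volume) (ν := volume) (L := innerₗ ℝ) (f := (G : ℝ → ℂ)) (g := u)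
      Real.continuous_fourierChar (by exact continuous_inner) G.integrable h1
    rw [flip_innerₗ] at this
    exact this
  rw [e2, e3] at e1
  simp only [hGx] at e1
  simpa [Complex.real_smul] using e1.symm

lemma aux_plancherel (u : ℝ → ℂ) (h1 : Integrable u) (h2 : MemLp u 2 volume) :
    eLpNorm (𝓕 u) 2 volume = eLpNorm u 2 volume := by
  rw [← eLpNorm_congr_ae (aux_fourier_ae_eq u h1 h2), ← eLpNorm_congr_ae h2.coeFn_toLp]
  have := Lp.norm_fourier_eq (h2.toLp u)
  rw [Lp.norm_def, Lp.norm_def, ENNReal.toReal_eq_toReal_iff' (Lp.eLpNorm_ne_top _)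
    (Lp.eLpNorm_ne_top _)] at this
  exact this

lemma aux_plancherel_le (u : ℝ → ℂ) (h1 : Integrable u) (h2 : MemLp u 2 volume) :
    eLpNorm u 2 volume ≤
      eLpNorm (fun ω : ℝ => ∫ x : ℝ, u x * Complex.exp (-(Complex.I * ω * x))) 2 volume := by
  set a : ℝ := (2 * Real.pi)⁻¹ with ha
  have hpi := Real.pi_gt_three
  have ha0 : 0 < a := by positivity
  have ha1 : a ≤ 1 := inv_le_one_of_one_le₀ (by linarith)
  have e1 : (fun ω : ℝ => ∫ x : ℝ, u x * Complex.exp (-(Complex.I * ω * x))) =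
      fun ω => (𝓕 u) (a * ω) := by
    ext ω
    rw [Real.fourier_eq']
    refine integral_congr_ae (ae_of_all _ fun x => ?_)
    simp only [smul_eq_mul]
    rw [mul_comm]
    congr 2
    simp only [RCLike.inner_apply, conj_trivial, ha]
    push_cast
    have : (Real.pi : ℂ) ≠ 0 := by exact_mod_cast Real.pi_ne_zero
    field_simp
  have hm := Real.smul_map_volume_mul_left ha0.ne'
  rw [e1, ← aux_plancherel u h1 h2]
  generalize 𝓕 u = v
  calc eLpNorm v 2 volume
      = eLpNorm v 2 (ENNReal.ofReal |a| • Measure.map (a * ·) volume) := by rw [hm]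
    _ ≤ eLpNorm v 2 (Measure.map (a * ·) volume) := by
      refine eLpNorm_mono_measure _ ?_
      have : ENNReal.ofReal |a| ≤ 1 := by
        rw [abs_of_pos ha0]; exact ENNReal.ofReal_le_one.mpr ha1
      intro s
      simp only [Measure.smul_apply, smul_eq_mul]
      exact mul_le_of_le_one_left' this
    _ = eLpNorm (fun ω => v (a * ω)) 2 volume :=
      ((Homeomorph.mulLeft₀ a ha0.ne').measurableEmbedding).eLpNorm_map_measure

end Plancherel

lemma aux_trig_approx (T : ℝ) (hT : 0 < T) (t : ℝ) (τ : ℝ → ℂ)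
    (hτ : MemLp τ 2 (volume.restrict (Set.Ioc t (t + T)))) (δ : ENNReal) (hδ : 0 < δ) :
    ∃ (s : Finset ℤ) (c : ℤ → ℂ),
      eLpNorm (fun ω : ℝ => τ ω - ∑ α ∈ s, c α *
        Complex.exp (-(2 * Real.pi * Complex.I * α * ω / T))) 2
        (volume.restrict (Set.Ioc t (t + T))) ≤ δ := by
  have : Fact (0 < T) := ⟨hT⟩
  have hl := hτ.memLp_liftIoc
  have hl' := hl.haarAddCircle
  set g := hl'.toLp _ with hg
  have hs := (Equiv.neg ℤ).hasSum_iff.mpr (hasSum_fourier_series_L2 g)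
  have hs' := (Metric.tendsto_nhds.mp hs)
  set δ' : ENNReal := min δ 1 with hδ'
  have hδ'0 : 0 < δ' := lt_min hδ one_pos
  have hδ't : δ' ≠ ⊤ := ne_top_of_le_ne_top ENNReal.one_ne_top (min_le_right _ _)
  set K : ENNReal := ENNReal.ofReal T ^ (1 / (2 : ENNReal).toReal) with hK
  have hK0 : K ≠ 0 := by simp [hK, hT]
  have hKt : K ≠ ⊤ := by simp [hK]
  have hη0 : 0 < (δ' / K).toReal :=
    ENNReal.toReal_pos (ENNReal.div_pos hδ'0.ne' hKt).ne' (ENNReal.div_ne_top hδ't hK0)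
  obtain ⟨s, hs2⟩ := (hs' _ hη0).exists
  refine ⟨s, fun α => fourierCoeff g (-α), ?_⟩
  set S : AddCircle T → ℂ := fun x => ∑ α ∈ s, fourierCoeff g (-α) * fourier (-α) x with hS
  have hSc : Continuous S := by
    refine continuous_finsetSum _ fun α _ => continuous_const.mul (fourier (-α)).continuous
  have h1 : eLpNorm (AddCircle.liftIoc T t τ - S) 2 AddCircle.haarAddCircle ≤ δ' / K := by
    have hae : (g - ∑ α ∈ s, fourierCoeff g (-α) • fourierLp 2 (-α) :
        Lp ℂ 2 (@AddCircle.haarAddCircle T _)) =ᵐ[AddCircle.haarAddCircle]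
        AddCircle.liftIoc T t τ - S := by
      refine (Lp.coeFn_sub _ _).trans ?_
      refine hl'.coeFn_toLp.sub ?_
      refine (Lp.coeFn_finsetSum _ _).trans ?_
      have : ∀ α : ℤ, ((fourierCoeff g (-α) • fourierLp 2 (-α) :
        Lp ℂ 2 (@AddCircle.haarAddCircle T _)) : AddCircle T → ℂ) =ᵐ[AddCircle.haarAddCircle]
          fun x => fourierCoeff g (-α) * fourier (-α) x := by
        intro α
        filter_upwards [Lp.coeFn_smul (fourierCoeff g (-α)) (fourierLp (T := T) 2 (-α)),
          coeFn_fourierLp (T := T) 2 (-α)] with x hx hx2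
        rw [hx, Pi.smul_apply, hx2, smul_eq_mul]
      have h3 := (Finset.eventually_all s).mpr fun α _ => this α
      filter_upwards [h3] with x hx
      simp only [hS, Finset.sum_apply]
      exact Finset.sum_congr rfl hx
    rw [← eLpNorm_congr_ae hae]
    rw [dist_comm, dist_eq_norm, Lp.norm_def] at hs2
    have := (ENNReal.toReal_lt_toReal (Lp.eLpNorm_ne_top _) (ENNReal.div_ne_top hδ't hK0)).mp hs2
    exact this.le
  have h2 : eLpNorm (AddCircle.liftIoc T t τ - S) 2 volume ≤ δ' := by
    rw [AddCircle.volume_eq_smul_haarAddCircle, eLpNorm_smul_measure_of_ne_top (by norm_num)]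
    calc _ ≤ K * (δ' / K) := by
            simp only [smul_eq_mul]
            exact mul_le_mul' (le_of_eq (by simp [hK])) h1
      _ = δ' := ENNReal.mul_div_cancel hK0 hKt
  have hmp := AddCircle.measurePreserving_mk T t
  have h3 : eLpNorm (fun ω : ℝ => (AddCircle.liftIoc T t τ - S) (ω : AddCircle T)) 2
      (volume.restrict (Set.Ioc t (t + T))) ≤ δ' := by
    refine le_trans (le_of_eq ?_) h2
    exact eLpNorm_comp_measurePreserving (hl.aestronglyMeasurable.sub hSc.aestronglyMeasurable) hmp
  refine le_trans (le_of_eq ?_) (h3.trans (min_le_left _ _))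
  refine eLpNorm_congr_ae ?_
  filter_upwards [ae_restrict_mem measurableSet_Ioc] with ω hω
  simp only [Pi.sub_apply, AddCircle.liftIoc_coe_apply hω, hS]
  congr 1
  refine Finset.sum_congr rfl fun α _ => ?_
  rw [fourier_coe_apply]
  congr 2
  push_cast
  ring

lemma aux_lintegral_tsum (T : ℝ) (hT : 0 < T) (t : ℝ) (g : ℝ → ENNReal) :
    ∫⁻ x, g x = ∑' j : ℤ, ∫⁻ x in Set.Ioc t (t + T), g (x + j * T) := by
  rw [(isAddFundamentalDomain_Ioc hT t volume).lintegral_eq_tsum'' g]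
  let e : ℤ ≃ AddSubgroup.zmultiples T :=
    Equiv.ofInjective (fun n : ℤ => n • T) (zsmul_left_strictMono hT).injective
  rw [← e.tsum_eq]
  refine tsum_congr fun j => lintegral_congr fun x => ?_
  congr 1
  change (j • T) + x = _
  simp [add_comm]

/-- Decay weights for the periodization. -/
noncomputable def auxBeta (j : ℤ) : ℝ := if j = 0 then 1 else |(j : ℝ)|⁻¹

lemma auxBeta_nonneg (j : ℤ) : 0 ≤ auxBeta j := by
  unfold auxBeta; split_ifs <;> positivity

lemma auxBeta_summable : Summable fun j : ℤ => auxBeta j ^ 2 := by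
  have h1 : Summable fun j : ℤ => 1 / (j : ℝ) ^ 2 := Real.summable_one_div_int_pow.mpr one_lt_two
  have h2 : Summable fun j : ℤ => if j = 0 then (1 : ℝ) else 0 :=
    summable_of_ne_finset_zero (s := {0}) (by
      intro b hb; simp only [Finset.mem_singleton] at hb; simp [hb])
  refine (h1.add h2).congr fun j => ?_
  unfold auxBeta
  by_cases hj : j = 0
  · simp [hj]
  · simp [hj]

/-- Periodization constant. -/
noncomputable def auxK : ℝ := Real.sqrt (∑' j : ℤ, auxBeta j ^ 2)

lemma aux_periodize (T : ℝ) (hT : 0 < T) (t : ℝ) (G : ℝ → ℂ) (E : ℝ → ℝ)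
    (h : ∀ x ∈ Set.Ioc t (t + T), ∀ j : ℤ, ‖G (x + j * T)‖ ≤ auxBeta j * E x) :
    eLpNorm G 2 volume ≤
      ENNReal.ofReal auxK * eLpNorm E 2 (volume.restrict (Set.Ioc t (t + T))) := by
  have hsq : ∀ {α : Type} [NormedAddCommGroup α] (H : ℝ → α) (ν : Measure ℝ),
      eLpNorm H 2 ν = (∫⁻ x, ‖H x‖ₑ ^ 2 ∂ν) ^ (1 / 2 : ℝ) := by
    intro α _ H ν
    rw [eLpNorm_eq_lintegral_rpow_enorm_toReal (by norm_num) (by norm_num)]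
    simp
  rw [hsq, hsq]
  have hK : ENNReal.ofReal auxK = (∑' j : ℤ, ENNReal.ofReal (auxBeta j ^ 2)) ^ (1 / 2 : ℝ) := by
    rw [← ENNReal.ofReal_tsum_of_nonneg (fun j => sq_nonneg _) auxBeta_summable,
      ENNReal.ofReal_rpow_of_nonneg (tsum_nonneg fun j => sq_nonneg _) (by norm_num),
      ← Real.sqrt_eq_rpow]
    rfl
  rw [hK, ← ENNReal.mul_rpow_of_nonneg _ _ (by norm_num)]
  refine ENNReal.rpow_le_rpow ?_ (by norm_num)
  rw [aux_lintegral_tsum T hT t, ← ENNReal.tsum_mul_right]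
  refine ENNReal.tsum_le_tsum fun j => ?_
  rw [← lintegral_const_mul' _ _ ENNReal.ofReal_ne_top]
  refine lintegral_mono_ae ?_
  filter_upwards [ae_restrict_mem measurableSet_Ioc] with x hx
  have h1 := h x hx j
  have h2 : ‖G (x + j * T)‖ₑ ≤ ENNReal.ofReal (auxBeta j) * ‖E x‖ₑ := by
    rw [← ofReal_norm, ← ofReal_norm, ← ENNReal.ofReal_mul (auxBeta_nonneg j)]
    refine ENNReal.ofReal_le_ofReal (h1.trans ?_)
    exact mul_le_mul_of_nonneg_left (le_abs_self _) (auxBeta_nonneg j)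
  calc ‖G (x + j * T)‖ₑ ^ 2 ≤ (ENNReal.ofReal (auxBeta j) * ‖E x‖ₑ) ^ 2 := by gcongr
    _ = _ := by rw [mul_pow, ENNReal.ofReal_pow (auxBeta_nonneg j)]

lemma aux_weight (p : ℕ) (x : ℝ) :
    |x| ^ p ≤ (1 + x ^ 2) ^ ((((p + 1 : ℕ) : ℝ) - 1) / 2) := by
  have e : ((((p + 1 : ℕ) : ℝ) - 1) / 2) = (1 / 2) * (p : ℝ) := by push_cast; ring
  rw [e, Real.rpow_mul (by positivity), ← Real.sqrt_eq_rpow, Real.rpow_natCast]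
  refine pow_le_pow_left₀ (abs_nonneg _) ?_ _
  rw [← Real.sqrt_sq_eq_abs]
  exact Real.sqrt_le_sqrt (by linarith)

lemma aux_Phi_decay {p m : ℕ} (hp : 1 ≤ p) (hm : 1 ≤ m) {μ : ℝ} {L : ℂ} {x : ℝ} {j : ℤ}
    (hj : j ≠ 0) (hx : |x| ≤ Real.pi * 2 ^ m)
    (h : Tendsto (fun N => partialProdNS (p + 1) m μ (x + j * (2 * Real.pi * 2 ^ m)) N)
      atTop (nhds L)) :
    ‖L‖ ≤ (|x| / 2 ^ m) ^ p * |(j : ℝ)|⁻¹ := by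
  have hpi := Real.pi_gt_three
  have hj1 : (1 : ℝ) ≤ |(j : ℝ)| := by
    rw [← Int.cast_abs]; exact_mod_cast Int.one_le_abs hj
  have h1 := aux_Phi_upper hm h
  have h2m : (0 : ℝ) < 2 ^ m := by positivity
  have ey : (x + j * (2 * Real.pi * 2 ^ m)) / 2 ^ (m + 1) = x / 2 ^ (m + 1) + j * Real.pi := by
    rw [pow_succ]; field_simp
  rw [ey] at h1
  have hs : |Real.sin (x / 2 ^ (m + 1) + j * Real.pi)| ≤ |x| / 2 ^ (m + 1) := by
    rw [Real.sin_add_int_mul_pi, abs_mul, abs_zpow, abs_neg, abs_one, one_zpow, one_mul]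
    refine Real.abs_sin_le_abs.trans (le_of_eq ?_)
    rw [abs_div, abs_of_pos (by positivity : (0 : ℝ) < 2 ^ (m + 1))]
  have hx2 : |x / 2 ^ (m + 1)| ≤ Real.pi / 2 := by
    rw [abs_div, abs_of_pos (by positivity : (0 : ℝ) < 2 ^ (m + 1)), div_le_iff₀ (by positivity),
      pow_succ]
    linarith
  have hy : |(j : ℝ)| / 2 ≤ |x / 2 ^ (m + 1) + j * Real.pi| := by
    have := abs_sub_abs_le_abs_sub ((j : ℝ) * Real.pi) (-(x / 2 ^ (m + 1)))
    rw [abs_neg, sub_neg_eq_add, abs_mul, abs_of_pos Real.pi_pos, add_comm (_ * _)] at this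
    nlinarith
  have h3 : (|(j : ℝ)| / 2) ^ p * ‖L‖ ≤ (|x| / 2 ^ (m + 1)) ^ p :=
    (mul_le_mul_of_nonneg_right (pow_le_pow_left₀ (by positivity) hy p) (norm_nonneg _)).trans
      (h1.trans (pow_le_pow_left₀ (abs_nonneg _) hs p))
  have h4 : |(j : ℝ)| ^ p * ‖L‖ ≤ (|x| / 2 ^ m) ^ p := by
    have e : |x| / 2 ^ (m + 1) = (|x| / 2 ^ m) / 2 := by rw [pow_succ]; field_simp
    rw [e, div_pow _ (2 : ℝ), div_pow _ (2 : ℝ), div_mul_eq_mul_div] at h3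
    exact (div_le_div_iff_of_pos_right (by positivity)).mp h3
  have h5 : |(j : ℝ)| ≤ |(j : ℝ)| ^ p := le_self_pow₀ hj1 (by omega)
  rw [← div_eq_mul_inv, le_div_iff₀ (by linarith), mul_comm]
  exact (mul_le_mul_of_nonneg_right h5 (norm_nonneg _)).trans h4

lemma aux_core (p m : ℕ) (hp : 1 ≤ p) (hm : 1 ≤ m) (μ : ℝ) (Φ : ℝ → ℂ)
    (hΦ : ∀ ω : ℝ, Tendsto (fun N => partialProdNS (p + 1) m μ ω N) atTop (nhds (Φ ω)))
    (F : ℝ → ℂ)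
    (hSob : MemLp (fun ω : ℝ => ((1 + ω ^ 2) ^ ((((p + 1 : ℕ) : ℝ) - 1) / 2) : ℝ) • F ω) 2 volume)
    (hFm : AEStronglyMeasurable F volume) (δ : ENNReal) (hδ : 0 < δ) :
    ∃ (s : Finset ℤ) (c : ℤ → ℂ),
      eLpNorm (fun ω : ℝ => F ω - (∑ α ∈ s, c α *
        Complex.exp (-(Complex.I * ω * (((2 : ℝ) ^ (-(m : ℤ)) * α : ℝ) : ℂ)))) * Φ ω) 2 volume ≤
      ENNReal.ofReal (((2 : ℝ) ^ m)⁻¹ ^ p) * eLpNorm (fun ω : ℝ =>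
          ((1 + ω ^ 2) ^ ((((p + 1 : ℕ) : ℝ) - 1) / 2) : ℝ) • F ω) 2 volume +
      ENNReal.ofReal auxK * (ENNReal.ofReal (((2 / Real.pi) ^ (p + 2))⁻¹ * ((2 : ℝ) ^ m)⁻¹ ^ p) *
        eLpNorm (fun ω : ℝ =>
          ((1 + ω ^ 2) ^ ((((p + 1 : ℕ) : ℝ) - 1) / 2) : ℝ) • F ω) 2 volume +
        ENNReal.ofReal (Real.pi ^ p) * δ) := by
  set w : ℝ → ℝ := fun ω => (1 + ω ^ 2) ^ ((((p + 1 : ℕ) : ℝ) - 1) / 2) with hw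
  change MemLp (fun ω => w ω • F ω) 2 volume at hSob
  change ∃ (s : Finset ℤ) (c : ℤ → ℂ), _ ≤
    ENNReal.ofReal (((2 : ℝ) ^ m)⁻¹ ^ p) * eLpNorm (fun ω => w ω • F ω) 2 volume +
      ENNReal.ofReal auxK * (ENNReal.ofReal (((2 / Real.pi) ^ (p + 2))⁻¹ * ((2 : ℝ) ^ m)⁻¹ ^ p) *
        eLpNorm (fun ω => w ω • F ω) 2 volume + ENNReal.ofReal (Real.pi ^ p) * δ)
  have hwx : ∀ x, |x| ^ p ≤ w x := aux_weight p
  have hw1 : ∀ x, 1 ≤ w x := fun x => by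
    refine Real.one_le_rpow (by nlinarith [sq_nonneg x]) ?_
    push_cast
    have : (0 : ℝ) ≤ (p : ℝ) := by positivity
    linarith
  have hpi := Real.pi_gt_three
  have hΦm : Measurable Φ := aux_Phi_measurable hΦ
  set h : ℝ := 2 ^ m with hh
  have hh0 : 0 < h := by positivity
  set P : ℝ := 2 * Real.pi * h with hP
  have hP0 : 0 < P := by positivity
  set t : ℝ := -(Real.pi * h) with ht
  set B : Set ℝ := Set.Ioc t (t + P) with hB
  have hBm : MeasurableSet B := measurableSet_Ioc
  set κ : ℝ := (2 / Real.pi) ^ (p + 2) with hκ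
  have hκ0 : 0 < κ := by positivity
  have hBabs : ∀ x ∈ B, |x| ≤ Real.pi * h := by
    intro x hx
    have h1 : t < x := hx.1
    have h2 : x ≤ t + P := hx.2
    rw [abs_le]; constructor <;> linarith
  have hBc : ∀ x ∉ B, h ≤ |x| := by
    intro x hx
    by_contra hc
    push Not at hc
    rw [abs_lt] at hc
    exact hx ⟨by nlinarith, by nlinarith⟩
  have hlow : ∀ x ∈ B, κ ≤ ‖Φ x‖ := by
    intro x hx
    refine aux_Phi_lower hm ?_ (hΦ x)
    rw [abs_div, abs_of_pos (by positivity : (0 : ℝ) < 2 ^ (m + 1)), div_le_iff₀ (by positivity),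
      pow_succ]
    have := hBabs x hx
    linarith
  set τ : ℝ → ℂ := fun x => F x / Φ x with hτ
  have hτn : ∀ x ∈ B, ‖τ x‖ ≤ κ⁻¹ * ‖F x‖ := by
    intro x hx
    rw [hτ, norm_div, div_eq_inv_mul]
    exact mul_le_mul_of_nonneg_right (inv_anti₀ hκ0 (hlow x hx)) (norm_nonneg _)
  have hτm : AEStronglyMeasurable τ volume := by
    exact (hFm.aemeasurable.div hΦm.aemeasurable).aestronglyMeasurable
  have hτL : MemLp τ 2 (volume.restrict B) := by
    refine (hSob.restrict B).of_le_mul (c := κ⁻¹) hτm.restrict ?_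
    filter_upwards [ae_restrict_mem hBm] with x hx
    refine (hτn x hx).trans (mul_le_mul_of_nonneg_left ?_ (by positivity))
    rw [norm_smul, Real.norm_of_nonneg (by linarith [hw1 x])]
    exact le_mul_of_one_le_left (norm_nonneg _) (hw1 x)
  obtain ⟨s, c, hsc⟩ := aux_trig_approx P hP0 t τ hτL δ hδ
  refine ⟨s, c, ?_⟩
  set Tr : ℝ → ℂ := fun ω => ∑ α ∈ s, c α *
        Complex.exp (-(Complex.I * ω * (((2 : ℝ) ^ (-(m : ℤ)) * α : ℝ) : ℂ))) with hTr
  have hTrc : Continuous Tr := by rw [hTr]; fun_prop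
  have hTr' : ∀ ω : ℝ, Tr ω = ∑ α ∈ s, c α *
        Complex.exp (-(2 * Real.pi * Complex.I * α * ω / P)) := by
    intro ω
    refine Finset.sum_congr rfl fun α _ => ?_
    congr 3
    rw [hP, hh]
    have : (Real.pi : ℂ) ≠ 0 := by exact_mod_cast Real.pi_ne_zero
    push_cast
    rw [zpow_neg, zpow_natCast]
    field_simp
  have hTrP : ∀ (ω : ℝ) (j : ℤ), Tr (ω + j * P) = Tr ω := by
    intro ω j
    rw [hTr', hTr']
    refine Finset.sum_congr rfl fun α _ => ?_
    congr 1
    rw [Complex.exp_eq_exp_iff_exists_int]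
    refine ⟨-(α * j), ?_⟩
    have : (P : ℂ) ≠ 0 := by exact_mod_cast hP0.ne'
    push_cast
    field_simp
    ring
  simp_rw [← hTr'] at hsc
  have hA1 : eLpNorm (Bᶜ.indicator F) 2 volume ≤
      ENNReal.ofReal (h⁻¹ ^ p) * eLpNorm (fun ω => w ω • F ω) 2 volume := by
    refine eLpNorm_le_mul_eLpNorm_of_ae_le_mul (ae_of_all _ fun x => ?_) 2
    by_cases hx : x ∈ B
    · rw [Set.indicator_of_notMem (by simpa using hx), norm_zero]; positivity
    · rw [Set.indicator_of_mem (by simpa using hx), norm_smul,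
        Real.norm_of_nonneg (by linarith [hw1 x]), ← mul_assoc]
      refine le_mul_of_one_le_left (norm_nonneg _) ?_
      have h1 : h ^ p ≤ w x := (pow_le_pow_left₀ hh0.le (hBc x hx) p).trans (hwx x)
      rw [inv_pow, ← div_eq_inv_mul, le_div_iff₀ (by positivity), one_mul]
      exact h1
  set E : ℝ → ℝ := fun x => κ⁻¹ * h⁻¹ ^ p * ‖w x • F x‖ + Real.pi ^ p * ‖τ x - Tr x‖ with hE
  have hA2 : eLpNorm (fun x => B.indicator F x - Tr x * Φ x) 2 volume ≤
      ENNReal.ofReal auxK * eLpNorm E 2 (volume.restrict B) := by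
    refine aux_periodize P hP0 t _ E ?_
    intro x hx j
    have hpip : (1 : ℝ) ≤ Real.pi ^ p := one_le_pow₀ (by linarith)
    by_cases hj : j = 0
    · simp only [hj, Int.cast_zero, zero_mul, add_zero, auxBeta, if_true, one_mul]
      rw [Set.indicator_of_mem hx]
      have hΦ0 : Φ x ≠ 0 := by
        have := hlow x hx
        intro h0; rw [h0, norm_zero] at this; linarith
      have e : F x - Tr x * Φ x = (τ x - Tr x) * Φ x := by
        simp only [hτ]; field_simp
      rw [e, norm_mul]
      calc ‖τ x - Tr x‖ * ‖Φ x‖ ≤ ‖τ x - Tr x‖ * 1 :=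
            mul_le_mul_of_nonneg_left (aux_Phi_le_one hm (hΦ x)) (norm_nonneg _)
        _ ≤ Real.pi ^ p * ‖τ x - Tr x‖ := by
            rw [mul_one]; exact le_mul_of_one_le_left (norm_nonneg _) hpip
        _ ≤ E x := le_add_of_nonneg_left (by positivity)
    · have hnot : x + j * P ∉ B := by
        intro hmem
        have a1 : t < x := hx.1
        have a2 : x ≤ t + P := hx.2
        have a3 : t < x + j * P := hmem.1
        have a4 : x + j * P ≤ t + P := hmem.2
        rcases lt_or_gt_of_ne hj with hlt | hgt
        · have : (j : ℝ) ≤ -1 := by exact_mod_cast (by omega : j ≤ -1)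
          nlinarith
        · have : (1 : ℝ) ≤ (j : ℝ) := by exact_mod_cast (by omega : 1 ≤ j)
          nlinarith
      rw [Set.indicator_of_notMem hnot, zero_sub, norm_neg, norm_mul, hTrP, auxBeta, if_neg hj]
      have hd : ‖Φ (x + j * P)‖ ≤ (|x| / h) ^ p * |(j : ℝ)|⁻¹ :=
        aux_Phi_decay hp hm hj (hBabs x hx) (hΦ _)
      have hT : ‖Tr x‖ ≤ κ⁻¹ * ‖F x‖ + ‖τ x - Tr x‖ := by
        have e : Tr x = τ x - (τ x - Tr x) := by ring
        calc ‖Tr x‖ = ‖τ x - (τ x - Tr x)‖ := by rw [← e]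
          _ ≤ ‖τ x‖ + ‖τ x - Tr x‖ := norm_sub_le _ _
          _ ≤ _ := by linarith [hτn x hx]
      have hq0 : 0 ≤ (|x| / h) ^ p := by positivity
      have hq1 : (|x| / h) ^ p ≤ Real.pi ^ p :=
        pow_le_pow_left₀ (by positivity) ((div_le_iff₀ hh0).mpr (hBabs x hx)) p
      have hq2 : (|x| / h) ^ p * ‖F x‖ ≤ h⁻¹ ^ p * ‖w x • F x‖ := by
        rw [norm_smul, Real.norm_of_nonneg (by linarith [hw1 x]), div_eq_inv_mul, mul_pow, mul_assoc]
        exact mul_le_mul_of_nonneg_left (mul_le_mul_of_nonneg_right (hwx x) (norm_nonneg _))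
          (by positivity)
      calc ‖Tr x‖ * ‖Φ (x + j * P)‖
          ≤ (κ⁻¹ * ‖F x‖ + ‖τ x - Tr x‖) * ((|x| / h) ^ p * |(j : ℝ)|⁻¹) :=
            mul_le_mul hT hd (norm_nonneg _) (by positivity)
        _ = |(j : ℝ)|⁻¹ * (κ⁻¹ * ((|x| / h) ^ p * ‖F x‖) + (|x| / h) ^ p * ‖τ x - Tr x‖) := by ring
        _ ≤ |(j : ℝ)|⁻¹ * (κ⁻¹ * (h⁻¹ ^ p * ‖w x • F x‖) + Real.pi ^ p * ‖τ x - Tr x‖) := by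
            gcongr
        _ = |(j : ℝ)|⁻¹ * E x := by rw [hE]; ring
  have hA3 : eLpNorm E 2 (volume.restrict B) ≤
      ENNReal.ofReal (κ⁻¹ * h⁻¹ ^ p) * eLpNorm (fun ω => w ω • F ω) 2 volume +
        ENNReal.ofReal (Real.pi ^ p) * δ := by
    have m1 : AEStronglyMeasurable (fun x => κ⁻¹ * h⁻¹ ^ p * ‖w x • F x‖) (volume.restrict B) :=
      (hSob.aestronglyMeasurable.norm.const_mul _).restrict
    have m2 : AEStronglyMeasurable (fun x => Real.pi ^ p * ‖τ x - Tr x‖) (volume.restrict B) :=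
      ((hτm.sub hTrc.aestronglyMeasurable).norm.const_mul _).restrict
    refine (eLpNorm_add_le m1 m2 (by norm_num)).trans (add_le_add ?_ ?_)
    · refine le_trans ?_ (mul_le_mul_right (eLpNorm_mono_measure _ (Measure.restrict_le_self (s := B))) _)
      refine eLpNorm_le_mul_eLpNorm_of_ae_le_mul (ae_of_all _ fun x => ?_) 2
      rw [Real.norm_of_nonneg (by positivity)]
    · refine le_trans ?_ (mul_le_mul_right hsc _)
      refine eLpNorm_le_mul_eLpNorm_of_ae_le_mul (ae_of_all _ fun x => ?_) 2
      rw [Real.norm_of_nonneg (by positivity)]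
  have hsplit : (fun ω => F ω - Tr ω * Φ ω) =
      Bᶜ.indicator F + fun x => B.indicator F x - Tr x * Φ x := by
    ext x
    simp only [Pi.add_apply]
    rw [← add_sub_assoc, add_comm (Bᶜ.indicator F x), ← Pi.add_apply (B.indicator F),
      Set.indicator_self_add_compl]
  rw [hsplit]
  refine (eLpNorm_add_le (hFm.indicator hBm.compl)
    ((hFm.indicator hBm).sub (hTrc.aestronglyMeasurable.mul hΦm.aestronglyMeasurable))
    (by norm_num)).trans (add_le_add hA1 ?_)
  exact hA2.trans (mul_le_mul_right hA3 _)

lemma aux_ft_continuous (u : ℝ → ℂ) (hu : Integrable u) :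
    Continuous fun ω : ℝ => ∫ x : ℝ, u x * Complex.exp (-(Complex.I * ω * x)) := by
  have hn : ∀ ω x : ℝ, ‖Complex.exp (-(Complex.I * ω * x))‖ = 1 := by
    intro ω x
    have : -(Complex.I * ω * x) = ((-(ω * x) : ℝ) : ℂ) * Complex.I := by push_cast; ring
    rw [this, Complex.norm_exp_ofReal_mul_I]
  refine continuous_of_dominated (bound := fun x => ‖u x‖) (fun ω => ?_) (fun ω => ?_) hu.norm ?_
  · exact hu.aestronglyMeasurable.mul (by fun_prop : Continuous _).aestronglyMeasurable
  · refine ae_of_all _ fun x => ?_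
    rw [norm_mul, hn, mul_one]
  · refine ae_of_all _ fun x => ?_
    fun_prop

lemma aux_exp_bdd (u : ℝ → ℂ) (hu : Integrable u) (ω : ℝ) :
    Integrable fun x : ℝ => u x * Complex.exp (-(Complex.I * ω * x)) := by
  refine hu.mono (hu.aestronglyMeasurable.mul
    (by fun_prop : Continuous _).aestronglyMeasurable) (ae_of_all _ fun x => ?_)
  have : -(Complex.I * ω * x) = ((-(ω * x) : ℝ) : ℂ) * Complex.I := by push_cast; ring
  rw [norm_mul, this, Complex.norm_exp_ofReal_mul_I, mul_one]

lemma aux_transfer (f F : ℝ → ℂ) (hf : MemLp f 2 volume)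
    (hF : Tendsto (fun R : ℝ => eLpNorm
        (fun ω : ℝ => F ω - ∫ x in (-R)..R, f x * Complex.exp (-(Complex.I * ω * x)))
        2 volume) atTop (nhds 0))
    (hFm : AEStronglyMeasurable F volume)
    (q : ℝ → ℂ) (hq1 : Integrable q) (hq2 : MemLp q 2 volume) :
    eLpNorm (fun x => f x - q x) 2 volume ≤
      eLpNorm (fun ω : ℝ => F ω - ∫ x : ℝ, q x * Complex.exp (-(Complex.I * ω * x))) 2 volume := by
  set Q : ℝ → ℂ := fun ω => ∫ x : ℝ, q x * Complex.exp (-(Complex.I * ω * x)) with hQ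
  have hQc : Continuous Q := aux_ft_continuous q hq1
  let fR : ℕ → ℝ → ℂ := fun N => (Set.Ioc (-(N : ℝ)) N).indicator f
  have hfR2 : ∀ N, MemLp (fR N) 2 volume := fun N => hf.indicator measurableSet_Ioc
  have hfR1 : ∀ N, Integrable (fR N) := fun N => by
    rw [integrable_indicator_iff measurableSet_Ioc]
    exact (hf.restrict _).integrable (by norm_num)
  have htr : ∀ (N : ℕ) (ω : ℝ), ∫ x : ℝ, fR N x * Complex.exp (-(Complex.I * ω * x)) =
      ∫ x in (-(N : ℝ))..N, f x * Complex.exp (-(Complex.I * ω * x)) := by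
    intro N ω
    have h0 : (0 : ℝ) ≤ N := by positivity
    rw [intervalIntegral.integral_of_le (by linarith), ← integral_indicator measurableSet_Ioc]
    refine integral_congr_ae (ae_of_all _ fun x => ?_)
    simp only [fR]
    rw [Set.indicator_mul_left]
  have hlim : ∀ᵐ x ∂(volume : Measure ℝ),
      Tendsto (fun N => fR N x - q x) atTop (nhds (f x - q x)) := by
    refine ae_of_all _ fun x => ?_
    refine Tendsto.congr' ?_ tendsto_const_nhds
    obtain ⟨N0, hN0⟩ := exists_nat_gt |x|
    filter_upwards [eventually_ge_atTop N0] with N hN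
    have hN' : |x| < N := hN0.trans_le (by exact_mod_cast hN)
    rw [abs_lt] at hN'
    simp only [fR]
    have hmem : x ∈ Set.Ioc (-(N : ℝ)) N := ⟨hN'.1, hN'.2.le⟩
    rw [Set.indicator_of_mem hmem]
  have hb : ∀ N : ℕ, eLpNorm (fun x => fR N x - q x) 2 volume ≤
      eLpNorm (fun ω : ℝ => F ω - ∫ x in (-(N : ℝ))..N,
        f x * Complex.exp (-(Complex.I * ω * x))) 2 volume +
      eLpNorm (fun ω => F ω - Q ω) 2 volume := by
    intro N
    refine (aux_plancherel_le _ ((hfR1 N).sub hq1) ((hfR2 N).sub hq2)).trans ?_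
    have e : (fun ω : ℝ => ∫ x : ℝ, (fR N - q) x * Complex.exp (-(Complex.I * ω * x))) =
        (fun ω => F ω - Q ω) - (fun ω : ℝ => F ω - ∫ x in (-(N : ℝ))..N,
        f x * Complex.exp (-(Complex.I * ω * x))) := by
      ext ω
      simp only [Pi.sub_apply, sub_mul]
      rw [integral_sub (aux_exp_bdd _ (hfR1 N) ω) (aux_exp_bdd _ hq1 ω), htr]
      ring
    rw [e, add_comm]
    refine eLpNorm_sub_le (hFm.sub hQc.aestronglyMeasurable) (hFm.sub ?_) (by norm_num)
    have := aux_ft_continuous _ (hfR1 N)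
    simp_rw [htr] at this
    exact this.aestronglyMeasurable
  refine (Lp.eLpNorm_lim_le_liminf_eLpNorm
    (fun N => ((hfR2 N).sub hq2).aestronglyMeasurable) _ hlim).trans ?_
  have ht := (hF.comp tendsto_natCast_atTop_atTop).add_const
    (eLpNorm (fun ω => F ω - Q ω) 2 volume)
  rw [zero_add] at ht
  rw [← ht.liminf_eq]
  exact liminf_le_liminf (Eventually.of_forall hb)

/-- Approximation order (Corollary 4.4): if for each `m ≥ 1` the continuous compactly
supported function `φ m` has Fourier transform `Φ^{(n,m)}`, then for every
`f ∈ H^{n-1}(ℝ)` (membership expressed through its Fourier–Plancherel transform `F`)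
there is a constant `C`, independent of `m`, with
`inf_{g ∈ V^{(n,m)}} ‖f − g‖_{L²} ≤ C · 2^{-m(n-1)}`; the infimum over the closed span
`V^{(n,m)}` of the `2^{-m}`-shifts of `φ m` is expressed via finite linear combinations. -/
theorem approximation_order (n : ℕ) (hn : 2 ≤ n) (μ : ℝ) (hμ : 1 < μ)
    (Φ : ℕ → ℝ → ℂ)
    (hΦ : ∀ m : ℕ, ∀ ω : ℝ,
      Tendsto (fun N => partialProdNS n m μ ω N) atTop (nhds (Φ m ω)))
    (φ : ℕ → ℝ → ℝ)
    (hφc : ∀ m, 1 ≤ m → Continuous (φ m))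
    (hφs : ∀ m, 1 ≤ m → HasCompactSupport (φ m))
    (hφF : ∀ m, 1 ≤ m → ∀ ω : ℝ,
      ∫ x : ℝ, (φ m x : ℂ) * Complex.exp (-(Complex.I * ω * x)) = Φ m ω)
    (f F : ℝ → ℂ)
    (hf : MemLp f 2 volume)
    (hF : Tendsto (fun R : ℝ => eLpNorm
        (fun ω : ℝ => F ω - ∫ x in (-R)..R, f x * Complex.exp (-(Complex.I * ω * x)))
        2 volume) atTop (nhds 0))
    (hSob : MemLp (fun ω : ℝ => ((1 + ω ^ 2) ^ (((n : ℝ) - 1) / 2) : ℝ) • F ω) 2 volume) :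
    ∃ C : ℝ, ∀ m : ℕ, 1 ≤ m → ∀ ε : ℝ, 0 < ε →
      ∃ (s : Finset ℤ) (c : ℤ → ℂ),
        eLpNorm (fun x : ℝ =>
            f x - ∑ α ∈ s, c α * (φ m (x - (2 : ℝ) ^ (-(m : ℤ)) * α) : ℂ)) 2 volume
          ≤ ENNReal.ofReal (C * (2 : ℝ) ^ (-((m : ℝ) * ((n : ℝ) - 1))) + ε) := by
  obtain ⟨p, rfl⟩ : ∃ p, n = p + 1 := ⟨n - 1, by omega⟩
  have hp : 1 ≤ p := by omega
  have hFm : AEStronglyMeasurable F volume := by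
    have hc : Continuous fun ω : ℝ =>
        ((1 + ω ^ 2) ^ ((((p + 1 : ℕ) : ℝ) - 1) / 2) : ℝ)⁻¹ := by
      refine Continuous.inv₀ ?_ fun x => by positivity
      exact Continuous.rpow_const (by fun_prop) fun x => Or.inl (by positivity)
    refine (hc.aestronglyMeasurable.smul hSob.aestronglyMeasurable).congr
      (ae_of_all _ fun x => ?_)
    simp only [Pi.smul_apply']
    rw [smul_smul, inv_mul_cancel₀ (by positivity), one_smul]
  set A : ENNReal := eLpNorm (fun ω : ℝ =>
    ((1 + ω ^ 2) ^ ((((p + 1 : ℕ) : ℝ) - 1) / 2) : ℝ) • F ω) 2 volume with hA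
  have hAt : A ≠ ⊤ := hSob.eLpNorm_ne_top
  set a : ℝ := A.toReal with ha
  have ha0 : 0 ≤ a := ENNReal.toReal_nonneg
  have hAa : A = ENNReal.ofReal a := (ENNReal.ofReal_toReal hAt).symm
  have hK0 : 0 ≤ auxK := Real.sqrt_nonneg _
  set κ : ℝ := (2 / Real.pi) ^ (p + 2) with hκ
  have hκ0 : 0 < κ := by have := Real.pi_pos; positivity
  refine ⟨a + auxK * (κ⁻¹ * a), fun m hm ε hε => ?_⟩
  have hpip : 0 < Real.pi ^ p := by have := Real.pi_pos; positivity
  set d : ℝ := ε / (auxK * Real.pi ^ p + 1) with hd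
  have hd0 : 0 < d := by positivity
  obtain ⟨s, c, hsc⟩ := aux_core p m hp hm μ (Φ m) (hΦ m) F hSob hFm (ENNReal.ofReal d)
    (ENNReal.ofReal_pos.mpr hd0)
  refine ⟨s, c, ?_⟩
  set b : ℤ → ℝ := fun α => (2 : ℝ) ^ (-(m : ℤ)) * α with hb
  have hg : ∀ α : ℤ, Continuous (fun x : ℝ => (φ m (x - b α) : ℂ)) := fun α =>
    Complex.continuous_ofReal.comp ((hφc m hm).comp (continuous_id.sub continuous_const))
  have hgs : ∀ α : ℤ, HasCompactSupport (fun x : ℝ => (φ m (x - b α) : ℂ)) := fun α =>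
    ((hφs m hm).comp_homeomorph (Homeomorph.subRight (b α))).comp_left
      (g := fun t : ℝ => (t : ℂ)) (by simp)
  have hgi : ∀ α : ℤ, Integrable (fun x : ℝ => c α * (φ m (x - b α) : ℂ)) := fun α =>
    ((hg α).integrable_of_hasCompactSupport (hgs α)).const_mul _
  have hg2 : ∀ α : ℤ, MemLp (fun x : ℝ => c α * (φ m (x - b α) : ℂ)) 2 volume := fun α =>
    ((hg α).memLp_of_hasCompactSupport (hgs α)).const_mul _
  have hq1 : Integrable fun x : ℝ => ∑ α ∈ s, c α * (φ m (x - b α) : ℂ) :=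
    integrable_finsetSum s fun α _ => hgi α
  have hq2 : MemLp (fun x : ℝ => ∑ α ∈ s, c α * (φ m (x - b α) : ℂ)) 2 volume :=
    memLp_finsetSum s fun α _ => hg2 α
  refine (aux_transfer f F hf hF hFm _ hq1 hq2).trans ?_
  have hFT : ∀ ω : ℝ, ∫ x : ℝ, (∑ α ∈ s, c α * (φ m (x - b α) : ℂ)) *
      Complex.exp (-(Complex.I * ω * x)) =
      (∑ α ∈ s, c α * Complex.exp (-(Complex.I * ω * ((b α : ℝ) : ℂ)))) * Φ m ω := by
    intro ω
    simp_rw [Finset.sum_mul]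
    rw [integral_finsetSum s fun α _ => aux_exp_bdd _ (hgi α) ω]
    refine Finset.sum_congr rfl fun α _ => ?_
    rw [← hφF m hm ω, ← integral_const_mul,
      ← integral_sub_right_eq_self (fun x : ℝ => c α *
        Complex.exp (-(Complex.I * ω * ((b α : ℝ) : ℂ))) *
          ((φ m x : ℂ) * Complex.exp (-(Complex.I * ω * x)))) (b α)]
    refine integral_congr_ae (ae_of_all _ fun x => ?_)
    have : Complex.exp (-(Complex.I * ω * x)) = Complex.exp (-(Complex.I * ω * ((b α : ℝ) : ℂ))) *
        Complex.exp (-(Complex.I * ω * ((x - b α : ℝ) : ℂ))) := by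
      rw [← Complex.exp_add]; congr 1; push_cast; ring
    simp only []
    rw [this]
    ring
  simp_rw [hFT]
  refine hsc.trans ?_
  have e2 : (2 : ℝ) ^ (-((m : ℝ) * (((p + 1 : ℕ) : ℝ) - 1))) = ((2 : ℝ) ^ m)⁻¹ ^ p := by
    have : ((p + 1 : ℕ) : ℝ) - 1 = p := by push_cast; ring
    rw [this, Real.rpow_neg (by norm_num), Real.rpow_mul (by norm_num), Real.rpow_natCast,
      Real.rpow_natCast, inv_pow]
  rw [e2]
  set H : ℝ := ((2 : ℝ) ^ m)⁻¹ ^ p with hH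
  have hH0 : 0 ≤ H := by positivity
  rw [← hA, hAa, ← ENNReal.ofReal_mul hH0, ← ENNReal.ofReal_mul (by positivity),
    ← ENNReal.ofReal_mul hpip.le, ← ENNReal.ofReal_add (by positivity) (by positivity),
    ← ENNReal.ofReal_mul hK0, ← ENNReal.ofReal_add (by positivity) (by positivity)]
  refine ENNReal.ofReal_le_ofReal ?_
  have hfin : auxK * Real.pi ^ p * d ≤ ε := by
    rw [hd, mul_div_assoc', div_le_iff₀ (by positivity)]
    nlinarith
  calc H * a + auxK * (κ⁻¹ * H * a + Real.pi ^ p * d)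
      = (a + auxK * (κ⁻¹ * a)) * H + auxK * Real.pi ^ p * d := by ring
    _ ≤ _ := by linarith
end

section
/- (Prewavelet orthogonality, core of Theorem 5.1.) Let φ, χ ∈ L²(ℝ) be compactly supported and let h > 0. Define g_α = ∫_ℝ φ(x) χ(x + hα) dx for α ∈ ℤ (only finitely many g_α are nonzero). Then the function ψ = Σ_{α∈ℤ} (−1)^α g_{α−1} χ(· − hα) satisfies ∫_ℝ ψ(x) φ(x − 2hβ) dx = 0 for every β ∈ ℤ; that is, ψ is orthogonal to every 2h-shift of φ. -/
open MeasureTheory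

lemma prewavelet_finite (φ χ : ℝ → ℝ)
    (hφs : HasCompactSupport φ) (hχs : HasCompactSupport χ)
    (h : ℝ) (hh : 0 < h)
    (g : ℤ → ℝ) (hg : ∀ α : ℤ, g α = ∫ x : ℝ, φ x * χ (x + h * α)) :
    ∃ N : ℤ, ∀ α : ℤ, α ∉ Finset.Icc (-N) N → g α = 0 := by
  obtain ⟨R, hR⟩ := hφs.isCompact.isBounded.exists_norm_le
  obtain ⟨T, hT⟩ := hχs.isCompact.isBounded.exists_norm_le
  refine ⟨⌈(R + T) / h⌉, fun α hα => ?_⟩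
  rw [hg]
  have : ∀ x, φ x * χ (x + h * α) = 0 := by
    intro x
    by_contra hne
    have h1 : φ x ≠ 0 := left_ne_zero_of_mul hne
    have h2 : χ (x + h * α) ≠ 0 := right_ne_zero_of_mul hne
    have h3 := hR x (subset_tsupport _ h1)
    have h4 := hT _ (subset_tsupport _ h2)
    rw [Real.norm_eq_abs, abs_le] at h3 h4
    apply hα
    have h5 := Int.le_ceil ((R + T) / h)
    rw [div_le_iff₀ hh] at h5
    rw [Finset.mem_Icc]
    constructor
    · have : (-(⌈(R + T) / h⌉ : ℝ)) ≤ α := by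
        by_contra hc
        push Not at hc
        nlinarith
      exact_mod_cast this
    · have : (α : ℝ) ≤ ⌈(R + T) / h⌉ := by
        by_contra hc
        push Not at hc
        nlinarith
      exact_mod_cast this
  simp [this]

/-- Prewavelet orthogonality (core of Theorem 5.1): with
`g_α = ∫ φ(x) χ(x + hα) dx`, the function
`ψ = Σ_α (−1)^α g_{α−1} χ(· − hα)` is orthogonal to every `2h`-shift of `φ`. -/
theorem prewavelet_orthogonality (φ χ : ℝ → ℝ)
    (hφm : MemLp φ 2 volume) (hχm : MemLp χ 2 volume)
    (hφs : HasCompactSupport φ) (hχs : HasCompactSupport χ)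
    (h : ℝ) (hh : 0 < h)
    (g : ℤ → ℝ) (hg : ∀ α : ℤ, g α = ∫ x : ℝ, φ x * χ (x + h * α))
    (ψ : ℝ → ℝ)
    (hψ : ∀ x : ℝ, ψ x = ∑' α : ℤ, (-1 : ℝ) ^ α * g (α - 1) * χ (x - h * α)) :
    ∀ β : ℤ, ∫ x : ℝ, ψ x * φ (x - 2 * h * β) = 0 := by
  intro β
  obtain ⟨N, hN⟩ := prewavelet_finite φ χ hφs hχs h hh g hg
  have hN' : ∀ α : ℤ, α ∉ Finset.Icc (-N + 1) (N + 1) → g (α - 1) = 0 := by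
    intro α hα
    apply hN
    simp only [Finset.mem_Icc] at hα ⊢
    omega
  have hsum : ∀ x, ψ x * φ (x - 2 * h * β) = ∑ α ∈ Finset.Icc (-N + 1) (N + 1),
      (-1 : ℝ) ^ α * g (α - 1) * (χ (x - h * α) * φ (x - 2 * h * β)) := by
    intro x
    rw [hψ, tsum_eq_sum (s := Finset.Icc (-N + 1) (N + 1)), Finset.sum_mul]
    · exact Finset.sum_congr rfl fun _ _ => by ring
    · intro α hα
      simp [hN' α hα]
  have hint : ∀ α : ℤ, Integrable (fun x => χ (x - h * α) * φ (x - 2 * h * β)) := by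
    intro α
    have h1 : MemLp (fun x => χ (x - h * α)) 2 volume :=
      hχm.comp_measurePreserving (measurePreserving_sub_right volume (h * α))
    have h2 : MemLp (fun x => φ (x - 2 * h * β)) 2 volume :=
      hφm.comp_measurePreserving (measurePreserving_sub_right volume (2 * h * β))
    exact h1.integrable_mul h2
  have hval : ∀ α : ℤ, ∫ x, χ (x - h * α) * φ (x - 2 * h * β) = g (2 * β - α) := by
    intro α
    rw [hg, ← integral_sub_right_eq_self
      (fun x => φ x * χ (x + h * ((2 * β - α : ℤ) : ℝ))) (2 * h * β)]
    congr 1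
    funext x
    rw [mul_comm]
    congr 2
    push_cast
    ring
  simp_rw [hsum]
  rw [integral_finsetSum _ fun α _ => (hint α).const_mul _]
  simp_rw [integral_const_mul, hval]
  have hts : ∑' α : ℤ, (-1 : ℝ) ^ α * g (α - 1) * g (2 * β - α) =
      ∑ α ∈ Finset.Icc (-N + 1) (N + 1), (-1 : ℝ) ^ α * g (α - 1) * g (2 * β - α) :=
    tsum_eq_sum (fun α hα => by simp [hN' α hα])
  rw [← hts]
  have key := (Equiv.subLeft (2 * β + 1)).tsum_eq
    (fun α : ℤ => (-1 : ℝ) ^ α * g (α - 1) * g (2 * β - α))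
  have h2 : ∀ α : ℤ, (-1 : ℝ) ^ (2 * β + 1 - α) * g (2 * β + 1 - α - 1) *
      g (2 * β - (2 * β + 1 - α)) = -((-1 : ℝ) ^ α * g (α - 1) * g (2 * β - α)) := by
    intro α
    have e1 : 2 * β + 1 - α - 1 = 2 * β - α := by ring
    have e2 : 2 * β - (2 * β + 1 - α) = α - 1 := by ring
    have e3 : (-1 : ℝ) ^ (2 * β + 1 - α) = -(-1 : ℝ) ^ α := by
      have e4 : 2 * β + 1 - α = 2 * (β - α) + 1 + α := by ring
      rw [e4, zpow_add₀ (by norm_num), zpow_add₀ (by norm_num), zpow_mul]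
      norm_num
    rw [e1, e2, e3]
    ring
  simp only [Equiv.subLeft_apply, h2, tsum_neg] at key
  linarith
end

section
/- (Prewavelet symbol identity, equation (dnm).) Let φ, χ ∈ L²(ℝ) be compactly supported real functions, h > 0, and let (a_α)_{α∈ℤ} be a finitely supported real sequence such that φ = Σ_{α∈ℤ} a_α χ(· − hα) almost everywhere. Define g_α = ∫_ℝ φ(x) χ(x + hα) dx, η_γ = ∫_ℝ χ(x) χ(x + hγ) dx, and the symbols A(z) = Σ_α a_α z^α and d(z) = Σ_α (−1)^α g_{α−1} z^α. Then for every z ∈ ℂ \ {0}: d(z) = −z · A(−z^{-1}) · Σ_{γ∈ℤ} (−1)^γ η_γ z^γ. -/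
open MeasureTheory

/-- Prewavelet symbol identity (equation (dnm)): if `φ = Σ_α a_α χ(· − hα)` a.e., with
cross-correlation `g_α = ∫ φ(x) χ(x + hα) dx` and autocorrelation
`η_γ = ∫ χ(x) χ(x + hγ) dx`, then the prewavelet symbol
`d(z) = Σ_α (−1)^α g_{α−1} z^α` satisfies
`d(z) = −z · A(−z⁻¹) · Σ_γ (−1)^γ η_γ z^γ` for every `z ≠ 0`. -/
theorem prewavelet_symbol_identity (φ χ : ℝ → ℝ)
    (hφm : MemLp φ 2 volume) (hχm : MemLp χ 2 volume)
    (hφs : HasCompactSupport φ) (hχs : HasCompactSupport χ)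
    (h : ℝ) (hh : 0 < h)
    (a : ℤ → ℝ) (ha : (Function.support a).Finite)
    (href : ∀ᵐ x : ℝ, φ x = ∑' α : ℤ, a α * χ (x - h * α))
    (g η : ℤ → ℝ)
    (hg : ∀ α : ℤ, g α = ∫ x : ℝ, φ x * χ (x + h * α))
    (hη : ∀ γ : ℤ, η γ = ∫ x : ℝ, χ x * χ (x + h * γ)) :
    ∀ z : ℂ, z ≠ 0 →
      (∑' α : ℤ, (((-1 : ℝ) ^ α * g (α - 1) : ℝ) : ℂ) * z ^ α) =
        -z * (∑' α : ℤ, ((a α : ℝ) : ℂ) * (-z⁻¹) ^ α) *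
          (∑' γ : ℤ, (((-1 : ℝ) ^ γ * η γ : ℝ) : ℂ) * z ^ γ) := by
  intro z hz
  classical
  set s := ha.toFinset with hs
  have hsa : ∀ b ∉ s, a b = 0 := by
    intro b hb
    simpa [hs] using hb
  -- shifted correlations
  have hsub : ∀ c : ℝ, MemLp (fun x => χ (x + c)) 2 volume := fun c =>
    hχm.comp_measurePreserving (measurePreserving_add_right volume c)
  have hint : ∀ c d : ℝ, Integrable (fun x => χ (x + c) * χ (x + d)) volume := fun c d =>
    (hsub c).integrable_mul (hsub d)
  have hgη : ∀ α : ℤ, g α = ∑ b ∈ s, a b * η (α + b) := by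
    intro α
    rw [hg]
    have h1 : ∫ x : ℝ, φ x * χ (x + h * α)
        = ∫ x : ℝ, ∑ b ∈ s, a b * (χ (x + -(h * b)) * χ (x + h * α)) := by
      apply integral_congr_ae
      filter_upwards [href] with x hx
      rw [hx, tsum_eq_sum (s := s) (fun b hb => by rw [hsa b hb, zero_mul]), Finset.sum_mul]
      refine Finset.sum_congr rfl fun b _ => ?_
      rw [mul_assoc, sub_eq_add_neg]
    rw [h1, integral_finsetSum _ (fun b _ => (hint _ _).const_mul _)]
    refine Finset.sum_congr rfl fun b _ => ?_
    rw [integral_const_mul, hη,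
      ← integral_add_right_eq_self (fun x => χ (x + -(h * b)) * χ (x + h * α)) (h * b)]
    congr 1
    refine integral_congr_ae (Filter.Eventually.of_forall fun x => ?_)
    simp only []
    congr 2
    · ring
    · push_cast
      ring
  -- finite support of the autocorrelation
  have hηfin : (Function.support η).Finite := by
    obtain ⟨R, hR⟩ := hχs.isCompact.isBounded.subset_closedBall 0
    have hR' : ∀ x, χ x ≠ 0 → |x| ≤ R := by
      intro x hx
      have := hR (subset_tsupport χ hx)
      simpa using this
    refine (Set.finite_Icc (-⌈2 * R / h⌉) ⌈2 * R / h⌉).subset fun γ hγ => ?_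
    by_contra hn
    apply hγ
    rw [hη]
    refine integral_eq_zero_of_ae (Filter.Eventually.of_forall fun x => ?_)
    by_contra hx
    have hx1 := abs_le.1 (hR' x (left_ne_zero_of_mul hx))
    have hx2 := abs_le.1 (hR' _ (right_ne_zero_of_mul hx))
    apply hn
    have hc := Int.le_ceil (2 * R / h)
    rw [Set.mem_Icc]
    constructor
    · have : -(γ : ℝ) ≤ 2 * R / h := by
        rw [le_div_iff₀ hh]
        nlinarith
      have : -γ ≤ ⌈2 * R / h⌉ := by
        have := this.trans hc
        exact_mod_cast this
      linarith
    · have : (γ : ℝ) ≤ 2 * R / h := by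
        rw [le_div_iff₀ hh]
        nlinarith
      exact_mod_cast this.trans hc
  obtain ⟨w, rfl⟩ : ∃ w, z = -w := ⟨-z, by simp⟩
  have hw : w ≠ 0 := by simpa using hz
  have hpow : ∀ k : ℤ, (-1 : ℂ) ^ k * (-w) ^ k = w ^ k := by
    intro k
    rw [← mul_zpow]
    simp
  have hsumm : ∀ c : ℤ, Summable fun α : ℤ => (η (α + c) : ℂ) * w ^ α := by
    intro c
    apply summable_of_hasFiniteSupport
    refine (hηfin.preimage (f := fun α : ℤ => α + c) (add_left_injective c).injOn).subset ?_
    intro α hα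
    have := left_ne_zero_of_mul hα
    simpa using this
  have hL : ∀ α : ℤ, (((-1 : ℝ) ^ α * g (α - 1) : ℝ) : ℂ) * (-w) ^ α
      = ∑ b ∈ s, (a b : ℂ) * ((η (α + (b - 1)) : ℂ) * w ^ α) := by
    intro α
    rw [hgη, ← hpow α]
    push_cast
    rw [Finset.mul_sum, Finset.sum_mul]
    refine Finset.sum_congr rfl fun b _ => ?_
    rw [show α - 1 + b = α + (b - 1) by ring]
    ring
  have hR : ∀ γ : ℤ, (((-1 : ℝ) ^ γ * η γ : ℝ) : ℂ) * (-w) ^ γ = (η γ : ℂ) * w ^ γ := by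
    intro γ
    rw [← hpow γ]
    push_cast
    ring
  simp_rw [hL, hR]
  rw [Summable.tsum_finsetSum (fun b _ => (hsumm _).mul_left _),
    tsum_eq_sum (s := s) (f := fun α : ℤ => ((a α : ℝ) : ℂ) * (-(-w)⁻¹) ^ α)
      (fun b hb => by simp [hsa b hb]), Finset.mul_sum, Finset.sum_mul]
  refine Finset.sum_congr rfl fun b _ => ?_
  rw [tsum_mul_left]
  have key : ∑' α : ℤ, (η (α + (b - 1)) : ℂ) * w ^ α
      = w ^ (1 - b) * ∑' γ : ℤ, (η γ : ℂ) * w ^ γ := by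
    rw [← tsum_mul_left, ← (Equiv.addRight (b - 1)).tsum_eq
      (fun γ : ℤ => w ^ (1 - b) * ((η γ : ℂ) * w ^ γ))]
    refine tsum_congr fun α => ?_
    simp only [Equiv.coe_addRight]
    rw [mul_left_comm, ← zpow_add₀ hw]
    congr 2
    ring
  rw [key, zpow_sub₀ hw, zpow_one, inv_neg, neg_neg, neg_neg, inv_zpow]
  ring
end

section
/- (Two-scale relation for the prewavelet coefficients, key identity in Theorem 5.3.) Let χ₀, χ₁, χ₂ ∈ L²(ℝ) be compactly supported real functions and h > 0. Let (a_α) and (b_α) be finitely supported real sequences with χ₀ = Σ_α a_α χ₁(· − hα) and χ₁ = Σ_α b_α χ₂(· − (h/2)α) almost everywhere. Define g⁰_α = ∫_ℝ χ₀(x) χ₁(x + hα) dx, g¹_α = ∫_ℝ χ₁(x) χ₂(x + (h/2)α) dx, and c_α = Σ_β a_β b_{α+2β}. Then for every α ∈ ℤ: g⁰_α = Σ_{β∈ℤ} c_{2α−β} g¹_β. -/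
open MeasureTheory

/-- Two-scale relation for the prewavelet coefficients (key identity in Theorem 5.3):
if `χ₀ = Σ_α a_α χ₁(· − hα)` and `χ₁ = Σ_α b_α χ₂(· − (h/2)α)` a.e., then the
cross-correlation coefficients `g⁰_α = ∫ χ₀(x) χ₁(x + hα) dx` and
`g¹_α = ∫ χ₁(x) χ₂(x + (h/2)α) dx` satisfy `g⁰_α = Σ_β c_{2α−β} g¹_β`, where
`c_α = Σ_β a_β b_{α+2β}`. -/
theorem prewavelet_coefficients_two_scale (χ₀ χ₁ χ₂ : ℝ → ℝ)
    (h₀ : MemLp χ₀ 2 volume) (h₁ : MemLp χ₁ 2 volume) (h₂ : MemLp χ₂ 2 volume)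
    (hs₀ : HasCompactSupport χ₀) (hs₁ : HasCompactSupport χ₁) (hs₂ : HasCompactSupport χ₂)
    (h : ℝ) (hh : 0 < h)
    (a b : ℤ → ℝ)
    (ha : (Function.support a).Finite) (hb : (Function.support b).Finite)
    (href₀ : ∀ᵐ x : ℝ, χ₀ x = ∑' α : ℤ, a α * χ₁ (x - h * α))
    (href₁ : ∀ᵐ x : ℝ, χ₁ x = ∑' α : ℤ, b α * χ₂ (x - (h / 2) * α))
    (g₀ g₁ c : ℤ → ℝ)
    (hg₀ : ∀ α : ℤ, g₀ α = ∫ x : ℝ, χ₀ x * χ₁ (x + h * α))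
    (hg₁ : ∀ α : ℤ, g₁ α = ∫ x : ℝ, χ₁ x * χ₂ (x + (h / 2) * α))
    (hc : ∀ α : ℤ, c α = ∑' β : ℤ, a β * b (α + 2 * β)) :
    ∀ α : ℤ, g₀ α = ∑' β : ℤ, c (2 * α - β) * g₁ β := by
  have shift : ∀ (f : ℝ → ℝ), MemLp f 2 volume → ∀ t : ℝ,
      MemLp (fun x => f (x + t)) 2 volume := fun f hf t =>
    hf.comp_measurePreserving (measurePreserving_add_right volume t)
  have key : ∀ (f u : ℝ → ℝ) (a : ℤ → ℝ) (k : ℝ), MemLp f 2 volume → MemLp u 2 volume →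
      ∀ A : Finset ℤ, ∫ x : ℝ, f x * ∑ β ∈ A, a β * u (x + (k * β))
        = ∑ β ∈ A, a β * ∫ x : ℝ, f x * u (x + (k * β)) := by
    intro f u a k hf hu A
    simp_rw [Finset.mul_sum]
    rw [integral_finsetSum]
    · refine Finset.sum_congr rfl fun β _ => ?_
      rw [← integral_const_mul]
      congr 1
      ext x
      ring
    · intro β _
      have := (hf.integrable_mul (shift u hu (k * β))).const_mul (a β)
      refine this.congr (Filter.Eventually.of_forall fun x => ?_)
      simp only [Pi.mul_apply]
      ring
  have tsA : ∀ F : ℤ → ℝ, ∑' β : ℤ, a β * F β = ∑ β ∈ ha.toFinset, a β * F β := by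
    intro F
    refine tsum_eq_sum fun β hβ => ?_
    have : a β = 0 := by simpa using hβ
    simp [this]
  have tsB : ∀ F : ℤ → ℝ, ∑' β : ℤ, b β * F β = ∑ β ∈ hb.toFinset, b β * F β := by
    intro F
    refine tsum_eq_sum fun β hβ => ?_
    have : b β = 0 := by simpa using hβ
    simp [this]
  have smB : ∀ F : ℤ → ℝ, Summable fun β : ℤ => b β * F β := by
    intro F
    refine summable_of_ne_finset_zero (s := hb.toFinset) fun β hβ => ?_
    have : b β = 0 := by simpa using hβ
    simp [this]
  have step1 : ∀ m : ℤ, ∫ x : ℝ, χ₁ x * χ₁ (x + h * m) = ∑' γ : ℤ, b γ * g₁ (2 * m - γ) := by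
    intro m
    have e : ∀ᵐ x : ℝ, χ₁ (x + h * m)
        = ∑' γ : ℤ, b γ * χ₂ ((x + h * m) - (h / 2) * γ) :=
      (measurePreserving_add_right volume (h * (m : ℝ))).quasiMeasurePreserving.ae href₁
    have e2 : ∫ x : ℝ, χ₁ x * χ₁ (x + h * m) = ∫ x : ℝ, χ₁ x *
        ∑ γ ∈ hb.toFinset, b γ * (fun y => χ₂ (y + h * m)) (x + (-(h / 2)) * γ) := by
      refine integral_congr_ae ?_
      filter_upwards [e] with x hx
      rw [hx, tsB]
      congr 1
      refine Finset.sum_congr rfl fun γ _ => ?_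
      congr 2
      ring
    rw [e2, key χ₁ _ b _ h₁ (shift χ₂ h₂ _), tsB]
    refine Finset.sum_congr rfl fun γ _ => ?_
    rw [hg₁]
    congr 2
    ext x
    congr 2
    push_cast
    ring
  have step0 : ∀ m : ℤ, g₀ m = ∑' β : ℤ, a β * ∫ x : ℝ, χ₁ x * χ₁ (x + h * (m + β : ℤ)) := by
    intro m
    rw [hg₀, tsA]
    have e2 : ∫ x : ℝ, χ₀ x * χ₁ (x + h * m) = ∫ x : ℝ, χ₁ (x + h * m) *
        ∑ β ∈ ha.toFinset, a β * χ₁ (x + (-h) * β) := by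
      refine integral_congr_ae ?_
      filter_upwards [href₀] with x hx
      rw [hx, tsA, mul_comm]
      congr 1
      refine Finset.sum_congr rfl fun γ _ => ?_
      congr 2
      ring
    rw [e2, key (fun x => χ₁ (x + h * m)) χ₁ a (-h) (shift χ₁ h₁ _) h₁]
    refine Finset.sum_congr rfl fun β _ => ?_
    congr 1
    rw [← integral_add_right_eq_self _ (h * (β : ℝ))]
    congr 1
    ext x
    rw [mul_comm]
    congr 2
    · ring
    · push_cast
      ring
  intro α
  rw [step0, tsA]
  have r : ∀ δ : ℤ, c (2 * α - δ) * g₁ δ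
      = ∑ β ∈ ha.toFinset, a β * (b (2 * (α + β) - δ) * g₁ δ) := by
    intro δ
    rw [hc, tsA, Finset.sum_mul]
    refine Finset.sum_congr rfl fun β _ => ?_
    rw [show 2 * α - δ + 2 * β = 2 * (α + β) - δ by ring]
    ring
  simp_rw [r]
  have q : ∀ (n δ : ℤ), b (n - δ) * g₁ δ
      = (fun γ => b γ * g₁ (n - γ)) (Equiv.subLeft n δ) := by
    intro n δ
    simp
  have sm : ∀ n : ℤ, Summable fun δ : ℤ => b (n - δ) * g₁ δ := by
    intro n
    simp_rw [q n]
    exact (Equiv.subLeft n).summable_iff.2 (smB fun γ => g₁ (n - γ))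
  rw [Summable.tsum_finsetSum fun β _ => (sm _).mul_left _]
  refine Finset.sum_congr rfl fun β _ => ?_
  rw [tsum_mul_left, step1]
  congr 1
  simp_rw [q]
  exact ((Equiv.subLeft (2 * (α + β))).tsum_eq fun γ => b γ * g₁ (2 * (α + β) - γ)).symm
end
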